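/- arXiv:1012.3179 — 3 statements merged into one kernel-verified Lean document; each statement's English description precedes it below -/
import Mathlib

section
/- Let $\lambda_1,\dots,\lambda_5$ be nonzero complex numbers and define $W:\mathbb{C}^6\to\mathbb{C}$ by $W(c_1,\tilde c_1,c_2,\tilde c_2,c_3,\tilde c_3)=\lambda_1 c_1\tilde c_2\tilde c_3+\lambda_2 \tilde c_1 c_2 c_3+\lambda_3 (c_1\tilde c_1)^2+\lambda_4 (c_2\tilde c_2)^2+\lambda_5 (c_3\tilde c_3)^2$. If at a point $(c_1,\tilde c_1,c_2,\tilde c_2,c_3,\tilde c_3)\in\mathbb{C}^6$ all six complex partial derivatives of $W$ vanish and also $W=0$, then all of the following products vanish: $c_1\tilde c_1=c_2\tilde c_2=c_3\tilde c_3=0$, $c_1\tilde c_2=c_1\tilde c_3=\tilde c_2\tilde c_3=0$, and $\tilde c_1 c_2=\tilde c_1 c_3=c_2 c_3=0$ (i.e., at most one of $\{c_1,\tilde c_2,\tilde c_3\}$ and at most one of $\{\tilde c_1,c_2,c_3\}$ is nonzero). -/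
theorem deriv_quad (f : ℂ → ℂ) (p q r x : ℂ) (hf : ∀ z, f z = p * z + q * z ^ 2 + r)
    (h : deriv f x = 0) : p + 2 * q * x = 0 := by
  have h1 : HasDerivAt f (p * 1 + q * ((2 : ℕ) * x ^ (2 - 1) * 1)) x := by
    rw [show f = fun z => p * z + q * z ^ 2 + r from funext hf]
    exact ((((hasDerivAt_id x).const_mul p).add
      (((hasDerivAt_id x).pow 2).const_mul q)).add_const r)
  rw [h1.deriv] at h
  norm_num at h
  linear_combination h

/-- At a critical point of the superpotential
`W = λ₁ c₁ c̃₂ c̃₃ + λ₂ c̃₁ c₂ c₃ + λ₃ (c₁ c̃₁)² + λ₄ (c₂ c̃₂)² + λ₅ (c₃ c̃₃)²`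
(all six complex partial derivatives vanish) where moreover `W = 0`,
all nine of the indicated products of coordinates vanish. -/
theorem stmt0 (l1 l2 l3 l4 l5 : ℂ)
    (hl1 : l1 ≠ 0) (hl2 : l2 ≠ 0) (hl3 : l3 ≠ 0) (hl4 : l4 ≠ 0) (hl5 : l5 ≠ 0)
    (c1 tc1 c2 tc2 c3 tc3 : ℂ)
    (hd1 : deriv (fun z : ℂ => l1 * z * tc2 * tc3 + l2 * tc1 * c2 * c3 +
      l3 * (z * tc1) ^ 2 + l4 * (c2 * tc2) ^ 2 + l5 * (c3 * tc3) ^ 2) c1 = 0)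
    (hd2 : deriv (fun z : ℂ => l1 * c1 * tc2 * tc3 + l2 * z * c2 * c3 +
      l3 * (c1 * z) ^ 2 + l4 * (c2 * tc2) ^ 2 + l5 * (c3 * tc3) ^ 2) tc1 = 0)
    (hd3 : deriv (fun z : ℂ => l1 * c1 * tc2 * tc3 + l2 * tc1 * z * c3 +
      l3 * (c1 * tc1) ^ 2 + l4 * (z * tc2) ^ 2 + l5 * (c3 * tc3) ^ 2) c2 = 0)
    (hd4 : deriv (fun z : ℂ => l1 * c1 * z * tc3 + l2 * tc1 * c2 * c3 +
      l3 * (c1 * tc1) ^ 2 + l4 * (c2 * z) ^ 2 + l5 * (c3 * tc3) ^ 2) tc2 = 0)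
    (hd5 : deriv (fun z : ℂ => l1 * c1 * tc2 * tc3 + l2 * tc1 * c2 * z +
      l3 * (c1 * tc1) ^ 2 + l4 * (c2 * tc2) ^ 2 + l5 * (z * tc3) ^ 2) c3 = 0)
    (hd6 : deriv (fun z : ℂ => l1 * c1 * tc2 * z + l2 * tc1 * c2 * c3 +
      l3 * (c1 * tc1) ^ 2 + l4 * (c2 * tc2) ^ 2 + l5 * (c3 * z) ^ 2) tc3 = 0)
    (hW : l1 * c1 * tc2 * tc3 + l2 * tc1 * c2 * c3 +
      l3 * (c1 * tc1) ^ 2 + l4 * (c2 * tc2) ^ 2 + l5 * (c3 * tc3) ^ 2 = 0) :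
    c1 * tc1 = 0 ∧ c2 * tc2 = 0 ∧ c3 * tc3 = 0 ∧
    c1 * tc2 = 0 ∧ c1 * tc3 = 0 ∧ tc2 * tc3 = 0 ∧
    tc1 * c2 = 0 ∧ tc1 * c3 = 0 ∧ c2 * c3 = 0 := by
  have e1 := deriv_quad _ (l1 * tc2 * tc3) (l3 * tc1 ^ 2) (l2 * tc1 * c2 * c3 + l4 * (c2 * tc2) ^ 2 + l5 * (c3 * tc3) ^ 2) _ (fun z => by ring) hd1
  have e2 := deriv_quad _ (l2 * c2 * c3) (l3 * c1 ^ 2) (l1 * c1 * tc2 * tc3 + l4 * (c2 * tc2) ^ 2 + l5 * (c3 * tc3) ^ 2) _ (fun z => by ring) hd2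
  have e3 := deriv_quad _ (l2 * tc1 * c3) (l4 * tc2 ^ 2) (l1 * c1 * tc2 * tc3 + l3 * (c1 * tc1) ^ 2 + l5 * (c3 * tc3) ^ 2) _ (fun z => by ring) hd3
  have e4 := deriv_quad _ (l1 * c1 * tc3) (l4 * c2 ^ 2) (l2 * tc1 * c2 * c3 + l3 * (c1 * tc1) ^ 2 + l5 * (c3 * tc3) ^ 2) _ (fun z => by ring) hd4
  have e5 := deriv_quad _ (l2 * tc1 * c2) (l5 * tc3 ^ 2) (l1 * c1 * tc2 * tc3 + l3 * (c1 * tc1) ^ 2 + l4 * (c2 * tc2) ^ 2) _ (fun z => by ring) hd5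
  have e6 := deriv_quad _ (l1 * c1 * tc2) (l5 * c3 ^ 2) (l2 * tc1 * c2 * c3 + l3 * (c1 * tc1) ^ 2 + l4 * (c2 * tc2) ^ 2) _ (fun z => by ring) hd6
  have hA : l1 * c1 * tc2 * tc3 = 0 := by
    linear_combination 2 * hW - 2 * tc1 * e2 + c1 * e1 - tc2 * e4 - tc3 * e6
  have hx : c1 * tc1 = 0 := by
    have h : l3 * (c1 * tc1) ^ 2 = 0 := by linear_combination (c1 * e1 - hA) / 2
    simpa [hl3] using h
  have hy : c2 * tc2 = 0 := by
    have h : l4 * (c2 * tc2) ^ 2 = 0 := by linear_combination (tc2 * e4 - hA) / 2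
    simpa [hl4] using h
  have hz : c3 * tc3 = 0 := by
    have h : l5 * (c3 * tc3) ^ 2 = 0 := by linear_combination (tc3 * e6 - hA) / 2
    simpa [hl5] using h
  have g1 : tc2 * tc3 = 0 :=
    (mul_eq_zero.mp (show l1 * (tc2 * tc3) = 0 by linear_combination e1 - 2 * l3 * tc1 * hx)).resolve_left hl1
  have g2 : c2 * c3 = 0 :=
    (mul_eq_zero.mp (show l2 * (c2 * c3) = 0 by linear_combination e2 - 2 * l3 * c1 * hx)).resolve_left hl2
  have g3 : tc1 * c3 = 0 :=
    (mul_eq_zero.mp (show l2 * (tc1 * c3) = 0 by linear_combination e3 - 2 * l4 * tc2 * hy)).resolve_left hl2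
  have g4 : c1 * tc3 = 0 :=
    (mul_eq_zero.mp (show l1 * (c1 * tc3) = 0 by linear_combination e4 - 2 * l4 * c2 * hy)).resolve_left hl1
  have g5 : tc1 * c2 = 0 :=
    (mul_eq_zero.mp (show l2 * (tc1 * c2) = 0 by linear_combination e5 - 2 * l5 * tc3 * hz)).resolve_left hl2
  have g6 : c1 * tc2 = 0 :=
    (mul_eq_zero.mp (show l1 * (c1 * tc2) = 0 by linear_combination e6 - 2 * l5 * c3 * hz)).resolve_left hl1
  exact ⟨hx, hy, hz, g6, g4, g1, g5, g3, g2⟩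
end

section
/- Let $\lambda_1,\dots,\lambda_5$ be nonzero complex numbers and define $W:\mathbb{C}^6\to\mathbb{C}$ by $W(c_1,\tilde c_1,c_2,\tilde c_2,c_3,\tilde c_3)=\lambda_1 c_1\tilde c_2\tilde c_3+\lambda_2 \tilde c_1 c_2 c_3+\lambda_3 (c_1\tilde c_1)^2+\lambda_4 (c_2\tilde c_2)^2+\lambda_5 (c_3\tilde c_3)^2$. Suppose at a point of $\mathbb{C}^6$ all six partial derivatives of $W$ vanish, $W=0$, and exactly two of the six coordinates are nonzero. Then the set of nonzero coordinates is one of exactly six pairs: $\{c_1,c_2\}$, $\{c_1,c_3\}$, $\{\tilde c_1,\tilde c_2\}$, $\{\tilde c_1,\tilde c_3\}$, $\{c_2,\tilde c_3\}$, or $\{c_3,\tilde c_2\}$. -/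
/-- The derivative of a quadratic polynomial function, used for every F-term. -/
theorem deriv_quad_aux (f : ℂ → ℂ) (a b k x : ℂ) (hf : ∀ z, f z = a * z ^ 2 + b * z + k) :
    deriv f x = 2 * a * x + b := by
  have e : f = fun z => a * z ^ 2 + b * z + k := funext hf
  have h : HasDerivAt (fun z : ℂ => a * z ^ 2 + b * z + k)
      (a * ((2 : ℕ) * x ^ (2 - 1)) + b * 1) x :=
    (((hasDerivAt_pow 2 x).const_mul a).add ((hasDerivAt_id x).const_mul b)).add_const k
  rw [e, h.deriv]
  push_cast
  ring

/-- At a critical point of the superpotential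
`W = λ₁ c₁ c̃₂ c̃₃ + λ₂ c̃₁ c₂ c₃ + λ₃ (c₁ c̃₁)² + λ₄ (c₂ c̃₂)² + λ₅ (c₃ c̃₃)²`
with `W = 0`, if exactly two of the six coordinates are nonzero, then the set of
nonzero coordinates is one of exactly six pairs:
`{c₁,c₂}`, `{c₁,c₃}`, `{c̃₁,c̃₂}`, `{c̃₁,c̃₃}`, `{c₂,c̃₃}`, `{c₃,c̃₂}`. -/
theorem stmt1 (l1 l2 l3 l4 l5 : ℂ)
    (hl1 : l1 ≠ 0) (hl2 : l2 ≠ 0) (hl3 : l3 ≠ 0) (hl4 : l4 ≠ 0) (hl5 : l5 ≠ 0)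
    (c1 tc1 c2 tc2 c3 tc3 : ℂ)
    (hd1 : deriv (fun z : ℂ => l1 * z * tc2 * tc3 + l2 * tc1 * c2 * c3 +
      l3 * (z * tc1) ^ 2 + l4 * (c2 * tc2) ^ 2 + l5 * (c3 * tc3) ^ 2) c1 = 0)
    (hd2 : deriv (fun z : ℂ => l1 * c1 * tc2 * tc3 + l2 * z * c2 * c3 +
      l3 * (c1 * z) ^ 2 + l4 * (c2 * tc2) ^ 2 + l5 * (c3 * tc3) ^ 2) tc1 = 0)
    (hd3 : deriv (fun z : ℂ => l1 * c1 * tc2 * tc3 + l2 * tc1 * z * c3 +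
      l3 * (c1 * tc1) ^ 2 + l4 * (z * tc2) ^ 2 + l5 * (c3 * tc3) ^ 2) c2 = 0)
    (hd4 : deriv (fun z : ℂ => l1 * c1 * z * tc3 + l2 * tc1 * c2 * c3 +
      l3 * (c1 * tc1) ^ 2 + l4 * (c2 * z) ^ 2 + l5 * (c3 * tc3) ^ 2) tc2 = 0)
    (hd5 : deriv (fun z : ℂ => l1 * c1 * tc2 * tc3 + l2 * tc1 * c2 * z +
      l3 * (c1 * tc1) ^ 2 + l4 * (c2 * tc2) ^ 2 + l5 * (z * tc3) ^ 2) c3 = 0)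
    (hd6 : deriv (fun z : ℂ => l1 * c1 * tc2 * z + l2 * tc1 * c2 * c3 +
      l3 * (c1 * tc1) ^ 2 + l4 * (c2 * tc2) ^ 2 + l5 * (c3 * z) ^ 2) tc3 = 0)
    (hW : l1 * c1 * tc2 * tc3 + l2 * tc1 * c2 * c3 +
      l3 * (c1 * tc1) ^ 2 + l4 * (c2 * tc2) ^ 2 + l5 * (c3 * tc3) ^ 2 = 0)
    (htwo : Set.ncard {i : Fin 6 | ![c1, tc1, c2, tc2, c3, tc3] i ≠ 0} = 2) :
    (c1 ≠ 0 ∧ c2 ≠ 0 ∧ tc1 = 0 ∧ tc2 = 0 ∧ c3 = 0 ∧ tc3 = 0) ∨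
    (c1 ≠ 0 ∧ c3 ≠ 0 ∧ tc1 = 0 ∧ c2 = 0 ∧ tc2 = 0 ∧ tc3 = 0) ∨
    (tc1 ≠ 0 ∧ tc2 ≠ 0 ∧ c1 = 0 ∧ c2 = 0 ∧ c3 = 0 ∧ tc3 = 0) ∨
    (tc1 ≠ 0 ∧ tc3 ≠ 0 ∧ c1 = 0 ∧ c2 = 0 ∧ tc2 = 0 ∧ c3 = 0) ∨
    (c2 ≠ 0 ∧ tc3 ≠ 0 ∧ c1 = 0 ∧ tc1 = 0 ∧ tc2 = 0 ∧ c3 = 0) ∨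
    (c3 ≠ 0 ∧ tc2 ≠ 0 ∧ c1 = 0 ∧ tc1 = 0 ∧ c2 = 0 ∧ tc3 = 0) := by
  rw [deriv_quad_aux _ (l3 * tc1 ^ 2) (l1 * tc2 * tc3)
    (l2 * tc1 * c2 * c3 + l4 * (c2 * tc2) ^ 2 + l5 * (c3 * tc3) ^ 2) _
    (fun z => by ring)] at hd1
  rw [deriv_quad_aux _ (l3 * c1 ^ 2) (l2 * c2 * c3)
    (l1 * c1 * tc2 * tc3 + l4 * (c2 * tc2) ^ 2 + l5 * (c3 * tc3) ^ 2) _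
    (fun z => by ring)] at hd2
  rw [deriv_quad_aux _ (l4 * tc2 ^ 2) (l2 * tc1 * c3)
    (l1 * c1 * tc2 * tc3 + l3 * (c1 * tc1) ^ 2 + l5 * (c3 * tc3) ^ 2) _
    (fun z => by ring)] at hd3
  rw [deriv_quad_aux _ (l4 * c2 ^ 2) (l1 * c1 * tc3)
    (l2 * tc1 * c2 * c3 + l3 * (c1 * tc1) ^ 2 + l5 * (c3 * tc3) ^ 2) _
    (fun z => by ring)] at hd4
  rw [deriv_quad_aux _ (l5 * tc3 ^ 2) (l2 * tc1 * c2)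
    (l1 * c1 * tc2 * tc3 + l3 * (c1 * tc1) ^ 2 + l4 * (c2 * tc2) ^ 2) _
    (fun z => by ring)] at hd5
  rw [deriv_quad_aux _ (l5 * c3 ^ 2) (l1 * c1 * tc2)
    (l2 * tc1 * c2 * c3 + l3 * (c1 * tc1) ^ 2 + l4 * (c2 * tc2) ^ 2) _
    (fun z => by ring)] at hd6
  classical
  rw [Set.ncard_eq_toFinset_card', Set.toFinset_setOf, Finset.card_filter] at htwo
  simp only [Fin.sum_univ_succ, Fin.sum_univ_zero] at htwo
  by_cases h1 : c1 = 0 <;> by_cases h2 : tc1 = 0 <;> by_cases h3 : c2 = 0 <;>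
    by_cases h4 : tc2 = 0 <;> by_cases h5 : c3 = 0 <;> by_cases h6 : tc3 = 0 <;>
    simp_all
end

section
/- Let $(p_1,q_1),(p_2,q_2),(p_3,q_3)\in\mathbb{Z}^2$ satisfy: (i) $p_1+p_2+p_3=0$ and $q_1+q_2+q_3=0$; (ii) $\sum_{i=1}^3 2q_i^2=12$; (iii) $\sum_{i=1}^3 (4p_iq_i+q_i^2)=-18$; (iv) $\sum_{i=1}^3 (q_i^3+6p_iq_i^2)=-30$; and (v) there exist real numbers $t^1,t^2>0$ such that for every $i$, $4p_i(t^2)^2+8q_i t^1 t^2+2q_i(t^2)^2=0$. Then, up to permutation of the indices, $(p_1,q_1)=(-2,2)$ and $(p_2,q_2)=(p_3,q_3)=(1,-1)$. -/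
/-- the Chern-class constraints (i)-(iv) for a wall decomposition of a rank-3
bundle with total Chern class `c = (3,0,(-12,18),-20)` on the `(2,4)` CICY, together with
the existence of a common point `(t¹,t²)` of the (positive-quadrant) Kähler cone where all
three line-bundle slopes vanish, force, up to permutation of the indices,
`(p₁,q₁) = (-2,2)` and `(p₂,q₂) = (p₃,q₃) = (1,-1)`. -/
theorem stmt4 (p1 q1 p2 q2 p3 q3 : ℤ)
    (h1 : p1 + p2 + p3 = 0) (h1' : q1 + q2 + q3 = 0)
    (h2 : 2 * q1 ^ 2 + 2 * q2 ^ 2 + 2 * q3 ^ 2 = 12)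
    (h3 : (4 * p1 * q1 + q1 ^ 2) + (4 * p2 * q2 + q2 ^ 2) + (4 * p3 * q3 + q3 ^ 2) = -18)
    (h4 : (q1 ^ 3 + 6 * p1 * q1 ^ 2) + (q2 ^ 3 + 6 * p2 * q2 ^ 2) +
      (q3 ^ 3 + 6 * p3 * q3 ^ 2) = -30)
    (h5 : ∃ t1 t2 : ℝ, 0 < t1 ∧ 0 < t2 ∧
      4 * (p1 : ℝ) * t2 ^ 2 + 8 * (q1 : ℝ) * t1 * t2 + 2 * (q1 : ℝ) * t2 ^ 2 = 0 ∧
      4 * (p2 : ℝ) * t2 ^ 2 + 8 * (q2 : ℝ) * t1 * t2 + 2 * (q2 : ℝ) * t2 ^ 2 = 0 ∧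
      4 * (p3 : ℝ) * t2 ^ 2 + 8 * (q3 : ℝ) * t1 * t2 + 2 * (q3 : ℝ) * t2 ^ 2 = 0) :
    ((p1, q1) = (-2, 2) ∧ (p2, q2) = (1, -1) ∧ (p3, q3) = (1, -1)) ∨
    ((p2, q2) = (-2, 2) ∧ (p1, q1) = (1, -1) ∧ (p3, q3) = (1, -1)) ∨
    ((p3, q3) = (-2, 2) ∧ (p1, q1) = (1, -1) ∧ (p2, q2) = (1, -1)) := by
  obtain ⟨t1, t2, _, ht2, e1, e2, e3⟩ := h5
  have ht : 4 * t2 ^ 2 ≠ 0 := by positivity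
  have a12 : p1 * q2 = p2 * q1 := by
    have : (p1 : ℝ) * q2 = p2 * q1 := by
      apply mul_left_cancel₀ ht
      linear_combination (q2 : ℝ) * e1 - (q1 : ℝ) * e2
    exact_mod_cast this
  have a13 : p1 * q3 = p3 * q1 := by
    have : (p1 : ℝ) * q3 = p3 * q1 := by
      apply mul_left_cancel₀ ht
      linear_combination (q3 : ℝ) * e1 - (q1 : ℝ) * e3
    exact_mod_cast this
  have b1 : -2 ≤ q1 ∧ q1 ≤ 2 := by constructor <;> nlinarith [sq_nonneg q2, sq_nonneg q3]
  have b2 : -2 ≤ q2 ∧ q2 ≤ 2 := by constructor <;> nlinarith [sq_nonneg q1, sq_nonneg q3]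
  obtain ⟨l1, u1⟩ := b1
  obtain ⟨l2, u2⟩ := b2
  obtain rfl : q3 = -q1 - q2 := by linarith
  simp only [Prod.mk.injEq]
  clear e1 e2 e3
  interval_cases q1 <;> interval_cases q2 <;> first | (exfalso; revert h2; norm_num; done) | (norm_num at h3 h4 a12 a13 ⊢; omega)
end
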